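/- arXiv:1204.5491 — 3 statements merged into one kernel-verified Lean document; each statement's English description precedes it below -/
import Mathlib

section
/- Proposition: Let κ ∈ ℕ and, for μ ∈ ℕ, let A_μ := (a_{n,m})_{n,m=0,…,μ} ∈ ℍ^{(μ+1)N×(μ+1)N} denote the Hermitian block matrix whose (n,m) block is a_{n,m}. The following are equivalent: (1) the kernel K(p,q) has κ negative squares in B_ρ; (2) ν₋(A_μ) ≤ κ for every μ ∈ ℕ, and ν₋(A_μ) = κ for at least one μ ∈ ℕ. -/
/- Setting: quaternionic hermitian kernels of the form `K(p,q) = Σ pⁿ a_{n,m} q̄^m`.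
Column vectors `ι → ℍ` form a right `ℍ`-vector space (a module over `ℍᵐᵒᵖ`).  For a
Hermitian matrix `H`, `v* H v = star v ⬝ᵥ H.mulVec v` is real, and the negativity
index `ν₋(H)` is the largest dimension of a right subspace on which the quadratic
form `v ↦ (v* H v).re` is negative definite. -/

open Quaternion MulOpposite Matrix

attribute [local instance] Matrix.normedAddCommGroup

/-- The negativity index `ν₋(H)`: the largest dimension of a right `ℍ`-subspace on
which the Hermitian form of `H` is strictly negative. -/
noncomputable def negIndex {ι : Type*} [Fintype ι] (H : Matrix ι ι ℍ[ℝ]) : ℕ :=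
  sSup {d : ℕ | ∃ W : Submodule ℍ[ℝ]ᵐᵒᵖ (ι → ℍ[ℝ]),
      Module.finrank ℍ[ℝ]ᵐᵒᵖ W = d ∧
      ∀ v ∈ W, v ≠ 0 → (star v ⬝ᵥ H.mulVec v).re < 0}

/-- The kernel `K(p,q) = Σ_{n,m≥0} pⁿ a_{n,m} q̄^m` built from the coefficient
matrices `a_{n,m}`. -/
noncomputable def kerK {N : ℕ} (a : ℕ → ℕ → Matrix (Fin N) (Fin N) ℍ[ℝ])
    (p q : ℍ[ℝ]) : Matrix (Fin N) (Fin N) ℍ[ℝ] :=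
  fun i j => ∑' nm : ℕ × ℕ, p ^ nm.1 * a nm.1 nm.2 i j * (star q) ^ nm.2

/-- The Gram block matrix `G(p₁,…,p_k) = (K(p_i,p_j))_{i,j}` of a kernel `K` at a
finite tuple of points. -/
noncomputable def gram {N k : ℕ} (K : ℍ[ℝ] → ℍ[ℝ] → Matrix (Fin N) (Fin N) ℍ[ℝ])
    (p : Fin k → ℍ[ℝ]) : Matrix (Fin k × Fin N) (Fin k × Fin N) ℍ[ℝ] :=
  fun x y => K (p x.1) (p y.1) x.2 y.2

/-- `K` has `κ` negative squares in the ball `B_r`: all Gram block matrices at tuples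
of points of `B_r` have `ν₋ ≤ κ`, with equality for at least one tuple. -/
noncomputable def hasNegSquares {N : ℕ} (a : ℕ → ℕ → Matrix (Fin N) (Fin N) ℍ[ℝ])
    (r : ℝ) (κ : ℕ) : Prop :=
  (∀ (k : ℕ) (p : Fin k → ℍ[ℝ]), (∀ i, ‖p i‖ < r) → negIndex (gram (kerK a) p) ≤ κ) ∧
  (∃ (k : ℕ) (p : Fin k → ℍ[ℝ]), (∀ i, ‖p i‖ < r) ∧ negIndex (gram (kerK a) p) = κ)

/-- The finite block matrix `A_μ = (a_{n,m})_{n,m=0,…,μ}`. -/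
noncomputable def blockA {N : ℕ} (a : ℕ → ℕ → Matrix (Fin N) (Fin N) ℍ[ℝ]) (μ : ℕ) :
    Matrix (Fin (μ + 1) × Fin N) (Fin (μ + 1) × Fin N) ℍ[ℝ] :=
  fun x y => a x.1 y.1 x.2 y.2

section helpers

theorem negIndex_bdd {ι : Type*} [Fintype ι] (H : Matrix ι ι ℍ[ℝ]) :
    BddAbove {d : ℕ | ∃ W : Submodule ℍ[ℝ]ᵐᵒᵖ (ι → ℍ[ℝ]),
      Module.finrank ℍ[ℝ]ᵐᵒᵖ W = d ∧
      ∀ v ∈ W, v ≠ 0 → (star v ⬝ᵥ H.mulVec v).re < 0} := by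
  have : Module.Finite ℍ[ℝ]ᵐᵒᵖ ℍ[ℝ] :=
    ⟨⟨{1}, by
      rw [eq_top_iff]
      intro x _
      rw [Finset.coe_singleton, Submodule.mem_span_singleton]
      exact ⟨op x, by simp⟩⟩⟩
  refine ⟨Module.finrank ℍ[ℝ]ᵐᵒᵖ (ι → ℍ[ℝ]), ?_⟩
  rintro d ⟨W, rfl, -⟩
  exact Submodule.finrank_le W

theorem negIndex_exists {ι : Type*} [Fintype ι] (H : Matrix ι ι ℍ[ℝ]) :
    ∃ W : Submodule ℍ[ℝ]ᵐᵒᵖ (ι → ℍ[ℝ]),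
      Module.finrank ℍ[ℝ]ᵐᵒᵖ W = negIndex H ∧
      ∀ v ∈ W, v ≠ 0 → (star v ⬝ᵥ H.mulVec v).re < 0 := by
  have := Nat.sSup_mem (s := {d : ℕ | ∃ W : Submodule ℍ[ℝ]ᵐᵒᵖ (ι → ℍ[ℝ]),
      Module.finrank ℍ[ℝ]ᵐᵒᵖ W = d ∧
      ∀ v ∈ W, v ≠ 0 → (star v ⬝ᵥ H.mulVec v).re < 0})
      ⟨0, ⊥, by simp, fun v hv h0 => absurd ((Submodule.mem_bot _).1 hv) h0⟩ (negIndex_bdd H)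
  exact this

theorem le_negIndex {ι : Type*} [Fintype ι] (H : Matrix ι ι ℍ[ℝ])
    (W : Submodule ℍ[ℝ]ᵐᵒᵖ (ι → ℍ[ℝ]))
    (hW : ∀ v ∈ W, v ≠ 0 → (star v ⬝ᵥ H.mulVec v).re < 0) :
    Module.finrank ℍ[ℝ]ᵐᵒᵖ W ≤ negIndex H :=
  le_csSup (negIndex_bdd H) ⟨W, rfl, hW⟩

/-- Congruence does not increase the negativity index. -/
theorem negIndex_congr_le {ι κ : Type*} [Fintype ι] [Fintype κ] (G : Matrix ι ι ℍ[ℝ])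
    (M : Matrix ι κ ℍ[ℝ]) : negIndex (Mᴴ * G * M) ≤ negIndex G := by
  obtain ⟨W, hd, hW⟩ := negIndex_exists (Mᴴ * G * M)
  let L : (κ → ℍ[ℝ]) →ₗ[ℍ[ℝ]ᵐᵒᵖ] (ι → ℍ[ℝ]) :=
    { toFun := fun v => M.mulVec v
      map_add' := fun v w => Matrix.mulVec_add M v w
      map_smul' := fun c v => Matrix.mulVec_smul M c v }
  have hQ : ∀ v, star v ⬝ᵥ (Mᴴ * G * M).mulVec v = star (L v) ⬝ᵥ G.mulVec (L v) := by
    intro v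
    change _ = star (M.mulVec v) ⬝ᵥ G.mulVec (M.mulVec v)
    rw [Matrix.star_mulVec, ← Matrix.dotProduct_mulVec, Matrix.mulVec_mulVec,
      Matrix.mulVec_mulVec, Matrix.mul_assoc]
  have hinj : Function.Injective (L.domRestrict W) := by
    rw [← LinearMap.ker_eq_bot, LinearMap.ker_eq_bot']
    intro v hv
    by_contra h0
    have h1 := hW v v.2 (fun h => h0 (Subtype.ext h))
    have h2 : L v = 0 := hv
    rw [hQ, h2] at h1
    simp at h1
  rw [← hd, ← LinearMap.finrank_range_of_inj hinj]
  apply le_negIndex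
  rintro _ ⟨v, rfl⟩ h0
  change (star (L v) ⬝ᵥ G.mulVec (L v)).re < 0
  rw [← hQ]
  apply hW v v.2
  intro h
  apply h0
  change L v = 0
  rw [h, map_zero]

/-- Lower semicontinuity of the negativity index. -/
theorem negIndex_lsc {ι : Type*} [Fintype ι] (H : Matrix ι ι ℍ[ℝ]) {α : Type*} (l : Filter α)
    (F : α → Matrix ι ι ℍ[ℝ])
    (hF : ∀ i j, Filter.Tendsto (fun s => F s i j) l (nhds (H i j))) :
    ∀ᶠ s in l, negIndex H ≤ negIndex (F s) := by
  obtain ⟨W, hd, hW⟩ := negIndex_exists H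
  have hreal : ∀ (r : ℝ) (v : ι → ℍ[ℝ]), r • v = op (r : ℍ[ℝ]) • v := by
    intro r v
    ext1 i
    change r • v i = v i * (r : ℍ[ℝ])
    rw [← Quaternion.coe_commutes, Quaternion.coe_mul_eq_smul]
  let WR : Submodule ℝ (ι → ℍ[ℝ]) :=
    { carrier := W
      add_mem' := fun h1 h2 => W.add_mem h1 h2
      zero_mem' := W.zero_mem
      smul_mem' := fun r v hv => by
        rw [hreal]
        exact W.smul_mem _ hv }
  have hclosed : IsClosed (W : Set (ι → ℍ[ℝ])) := WR.closed_of_finiteDimensional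
  have hcomp : IsCompact ((W : Set (ι → ℍ[ℝ])) ∩ Metric.sphere 0 1) :=
    (isCompact_sphere (0 : ι → ℍ[ℝ]) 1).inter_left hclosed
  have hcont : Continuous (fun x : (ι → ι → ℍ[ℝ]) × (ι → ℍ[ℝ]) =>
      (∑ i, star (x.2 i) * ∑ j, x.1 i j * x.2 j).re) := by
    refine Quaternion.continuous_re.comp ?_
    fun_prop
  have hev : ∀ᶠ A in nhds (H : ι → ι → ℍ[ℝ]), ∀ v ∈ (W : Set (ι → ℍ[ℝ])) ∩ Metric.sphere 0 1,
      (∑ i, star (v i) * ∑ j, A i j * v j).re < 0 := by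
    apply hcomp.eventually_forall_of_forall_eventually
    rintro v ⟨hv, hv1⟩
    have h0 : v ≠ 0 := by
      rintro rfl
      simp at hv1
    have := hW v hv h0
    exact hcont.continuousAt.eventually_lt continuousAt_const this
  have hF' : Filter.Tendsto (fun s => (F s : ι → ι → ℍ[ℝ])) l (nhds (H : ι → ι → ℍ[ℝ])) :=
    tendsto_pi_nhds.2 fun i => tendsto_pi_nhds.2 fun j => hF i j
  filter_upwards [hF'.eventually hev] with s hs
  rw [← hd]
  apply le_negIndex
  intro v hv h0
  have hn : 0 < ‖v‖ := norm_pos_iff.2 h0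
  have h1 := hs (‖v‖⁻¹ • v) ⟨WR.smul_mem _ hv, by
    rw [mem_sphere_zero_iff_norm, norm_smul, norm_inv, norm_norm, inv_mul_cancel₀ hn.ne']⟩
  have h2 : (∑ i, star ((‖v‖⁻¹ • v) i) * ∑ j, F s i j * (‖v‖⁻¹ • v) j) =
      (‖v‖⁻¹ * ‖v‖⁻¹) • (star v ⬝ᵥ (F s).mulVec v) := by
    simp only [dotProduct, Matrix.mulVec, Pi.smul_apply, Pi.star_apply, Finset.smul_sum,
      Finset.mul_sum, Quaternion.star_smul, smul_mul_assoc, mul_smul_comm, smul_smul]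
  rw [h2, Quaternion.re_smul, smul_eq_mul] at h1
  by_contra hc
  have : 0 < ‖v‖⁻¹ := inv_pos.2 hn
  have := mul_nonneg (mul_pos this this).le (not_lt.1 hc)
  linarith

/-- Block version of the congruence lemma. -/
theorem negIndex_block_le {N k l : ℕ} (G : Matrix (Fin k × Fin N) (Fin k × Fin N) ℍ[ℝ])
    (B : Fin k → Fin l → ℍ[ℝ]) (F : Matrix (Fin l × Fin N) (Fin l × Fin N) ℍ[ℝ])
    (hF : ∀ n x m y, F (n, x) (m, y) = ∑ i, ∑ j, star (B i n) * G (i, x) (j, y) * B j m) :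
    negIndex F ≤ negIndex G := by
  let M : Matrix (Fin k × Fin N) (Fin l × Fin N) ℍ[ℝ] :=
    fun i n => if i.2 = n.2 then B i.1 n.1 else 0
  have : F = Mᴴ * G * M := by
    ext1 ⟨n, x⟩ ⟨m, y⟩
    have hM : ∀ i x n y, M (i, x) (n, y) = if x = y then B i n else 0 := fun _ _ _ _ => rfl
    rw [hF]
    simp only [Matrix.mul_apply, Fintype.sum_prod_type, Matrix.conjTranspose_apply, hM,
      apply_ite star, star_zero, ite_mul, zero_mul, mul_ite, mul_zero, Finset.sum_ite_eq',
      Finset.mem_univ, if_true, Finset.sum_mul]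
    rw [Finset.sum_comm]
  rw [this]
  exact negIndex_congr_le G M

theorem entry_bound {N : ℕ} (a : ℕ → ℕ → Matrix (Fin N) (Fin N) ℍ[ℝ]) {ρ C D : ℝ} (hρ : 0 < ρ)
    (hC : 0 ≤ C) (x y : Fin N) (n m : ℕ) (p q : ℍ[ℝ])
    (hp : ‖p‖ ≤ C * ρ ^ n) (hq : ‖q‖ ≤ D * ρ ^ m) :
    ‖p * a n m x y * q‖ ≤ C * D * (‖a n m‖ * ρ ^ (n + m)) := by
  rw [norm_mul, norm_mul]
  have h1 : ‖a n m x y‖ ≤ ‖a n m‖ := Matrix.norm_entry_le_entrywise_sup_norm _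
  calc ‖p‖ * ‖a n m x y‖ * ‖q‖ ≤ (C * ρ ^ n) * ‖a n m‖ * (D * ρ ^ m) := by gcongr
    _ = _ := by ring

theorem entry_summable {N : ℕ} (a : ℕ → ℕ → Matrix (Fin N) (Fin N) ℍ[ℝ]) {ρ : ℝ} (hρ : 0 < ρ)
    (hsum : Summable fun nm : ℕ × ℕ => ‖a nm.1 nm.2‖ * ρ ^ (nm.1 + nm.2))
    (x y : Fin N) (p q : ℍ[ℝ]) (hp : ‖p‖ < ρ) (hq : ‖q‖ < ρ) :
    Summable fun nm : ℕ × ℕ => p ^ nm.1 * a nm.1 nm.2 x y * (star q) ^ nm.2 := by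
  refine Summable.of_norm_bounded (hsum.mul_left (1 * 1)) fun nm => ?_
  refine entry_bound a hρ zero_le_one x y _ _ _ _ ?_ ?_
  · rw [norm_pow, one_mul]; gcongr
  · rw [norm_pow, one_mul, Quaternion.norm_star]; gcongr

theorem gram_le_block {N : ℕ} (a : ℕ → ℕ → Matrix (Fin N) (Fin N) ℍ[ℝ]) {ρ : ℝ} (hρ : 0 < ρ)
    (hsum : Summable fun nm : ℕ × ℕ => ‖a nm.1 nm.2‖ * ρ ^ (nm.1 + nm.2))
    {k : ℕ} (p : Fin k → ℍ[ℝ]) (hp : ∀ i, ‖p i‖ < ρ) :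
    ∃ μ, negIndex (gram (kerK a) p) ≤ negIndex (blockA a μ) := by
  let F : ℕ → Matrix (Fin k × Fin N) (Fin k × Fin N) ℍ[ℝ] := fun μ i j =>
    ∑ n : Fin (μ + 1), ∑ m : Fin (μ + 1),
      star (star (p i.1) ^ (n : ℕ)) * blockA a μ (n, i.2) (m, j.2) * star (p j.1) ^ (m : ℕ)
  have hev := negIndex_lsc (gram (kerK a) p) Filter.atTop F (by
    rintro ⟨i, x⟩ ⟨j, y⟩
    have h := (entry_summable a hρ hsum x y (p i) (p j) (hp i) (hp j)).hasSum
    have ht : Filter.Tendsto (fun μ : ℕ => Finset.range (μ + 1) ×ˢ Finset.range (μ + 1))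
        Filter.atTop Filter.atTop := by
      have := Filter.tendsto_finset_range.comp (Filter.tendsto_add_atTop_nat 1)
      refine Filter.tendsto_atTop.2 fun S => ?_
      filter_upwards [this.eventually_ge_atTop (S.image Prod.fst),
        this.eventually_ge_atTop (S.image Prod.snd)] with μ h1 h2 z hz
      exact Finset.mem_product.2 ⟨h1 (Finset.mem_image_of_mem _ hz),
        h2 (Finset.mem_image_of_mem _ hz)⟩
    refine (Filter.Tendsto.comp h ht).congr fun μ => ?_
    simp only [F, Function.comp, Finset.sum_product, blockA, star_pow, star_star]
    rw [Finset.sum_range]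
    refine Finset.sum_congr rfl fun n _ => ?_
    rw [Finset.sum_range])
  obtain ⟨μ, hμ⟩ := hev.exists
  refine ⟨μ, hμ.trans ?_⟩
  exact negIndex_block_le (blockA a μ) (fun n j => star (p j) ^ (n : ℕ)) (F μ) fun _ _ _ _ => rfl

theorem block_le_gram {N : ℕ} (a : ℕ → ℕ → Matrix (Fin N) (Fin N) ℍ[ℝ]) {ρ : ℝ} (hρ : 0 < ρ)
    (hsum : Summable fun nm : ℕ × ℕ => ‖a nm.1 nm.2‖ * ρ ^ (nm.1 + nm.2)) (μ : ℕ) :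
    ∃ p : Fin (μ + 1) → ℍ[ℝ], (∀ i, ‖p i‖ < ρ) ∧
      negIndex (blockA a μ) ≤ negIndex (gram (kerK a) p) := by
  -- nodes
  let t : Fin (μ + 1) → ℝ := fun j => ((j : ℕ) + 1 : ℝ)⁻¹
  have ht0 : ∀ j, 0 ≤ t j := fun j => by positivity
  have ht1 : ∀ j, t j ≤ 1 := fun j => inv_le_one_of_one_le₀ (by simp)
  have htinj : Function.Injective t := by
    intro i j h
    have h' := inv_injective h
    exact Fin.ext (by exact_mod_cast (add_right_cancel h'))
  obtain ⟨B, hB⟩ : ∃ B : Matrix (Fin (μ + 1)) (Fin (μ + 1)) ℝ,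
      (Matrix.vandermonde t)ᵀ * B = 1 := by
    refine ⟨((Matrix.vandermonde t)ᵀ)⁻¹, Matrix.mul_nonsing_inv _ ?_⟩
    rw [Matrix.det_transpose]
    exact (Matrix.det_vandermonde_ne_zero_iff.2 htinj).isUnit
  let u : ℕ → Fin (μ + 1) → ℝ := fun r n => ∑ j, t j ^ r * B j n
  have hu : ∀ r n : Fin (μ + 1), u r n = if r = n then 1 else 0 := by
    intro r n
    have := congrFun (congrFun hB r) n
    simpa [Matrix.mul_apply, Matrix.one_apply, Matrix.vandermonde_apply] using this
  obtain ⟨U, hU0, hU⟩ : ∃ U : ℝ, 0 ≤ U ∧ ∀ r n, |u r n| ≤ U := by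
    refine ⟨∑ n, ∑ j, |B j n|, by positivity, fun r n => ?_⟩
    calc |u r n| ≤ ∑ j, |t j ^ r * B j n| := Finset.abs_sum_le_sum_abs _ _
      _ ≤ ∑ j, |B j n| := by
        refine Finset.sum_le_sum fun j _ => ?_
        rw [abs_mul, abs_of_nonneg (pow_nonneg (ht0 j) r)]
        exact mul_le_of_le_one_left (abs_nonneg _) (pow_le_one₀ (ht0 j) (ht1 j))
      _ ≤ _ := Finset.single_le_sum (f := fun n => ∑ j, |B j n|)
        (fun _ _ => by positivity) (Finset.mem_univ n)
  -- the scaled coefficients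
  let c : ℝ → ℕ → Fin (μ + 1) → ℝ := fun s r n => (ρ * s) ^ r * u r n / (ρ * s) ^ (n : ℕ)
  have hc1 : ∀ s, 0 < s → ∀ r n : Fin (μ + 1), c s r n = if r = n then 1 else 0 := by
    intro s hs r n
    simp only [c, hu]
    split_ifs with h
    · subst h
      have : (ρ * s) ^ (r : ℕ) ≠ 0 := by positivity
      field_simp
    · simp
  have hc2 : ∀ s, 0 < s → ∀ r (n : Fin (μ + 1)), μ < r →
      c s r n = ρ ^ r / ρ ^ (n : ℕ) * u r n * s ^ (r - (n : ℕ)) := by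
    intro s hs r n hr
    have hn : (n : ℕ) ≤ r := by omega
    obtain ⟨e, rfl⟩ := Nat.exists_eq_add_of_le hn
    simp only [c, Nat.add_sub_cancel_left, mul_pow, pow_add]
    field_simp
  let C : Fin (μ + 1) → ℝ := fun n => (1 + U) / ρ ^ (n : ℕ)
  have hC0 : ∀ n, 0 ≤ C n := fun n => by positivity
  have hcb : ∀ s, 0 < s → s < 1 → ∀ r n, |c s r n| ≤ C n * ρ ^ r := by
    intro s hs hs1 r n
    rcases Nat.lt_or_ge μ r with hr | hr
    · rw [hc2 s hs r n hr, abs_mul, abs_mul, abs_of_pos (by positivity : 0 < ρ ^ r / ρ ^ (n : ℕ)),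
        abs_of_pos (by positivity : 0 < s ^ (r - (n : ℕ)))]
      calc ρ ^ r / ρ ^ (n : ℕ) * |u r n| * s ^ (r - (n : ℕ))
          ≤ ρ ^ r / ρ ^ (n : ℕ) * (1 + U) * 1 := by
            gcongr
            · linarith [hU r n]
            · exact pow_le_one₀ hs.le hs1.le
        _ = _ := by simp only [C]; ring
    · have := hc1 s hs ⟨r, by omega⟩ n
      simp only at this
      rw [this]
      split_ifs with h
      · subst h
        simp only [C, abs_one]
        have : 0 < ρ ^ r := by positivity
        rw [div_mul_cancel₀ _ this.ne']
        linarith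
      · have := hC0 n
        simp only [abs_zero]
        positivity
  have hclim : ∀ r n, Filter.Tendsto (fun s => c s r n) (nhdsWithin 0 (Set.Ioi 0))
      (nhds (if r = (n : ℕ) then 1 else 0)) := by
    intro r n
    rcases Nat.lt_or_ge μ r with hr | hr
    · have hne : r ≠ (n : ℕ) := by omega
      rw [if_neg hne]
      have h1 : Filter.Tendsto (fun s : ℝ => ρ ^ r / ρ ^ (n : ℕ) * u r n * s ^ (r - (n : ℕ)))
          (nhdsWithin 0 (Set.Ioi 0)) (nhds 0) := by
        have : Continuous (fun s : ℝ => ρ ^ r / ρ ^ (n : ℕ) * u r n * s ^ (r - (n : ℕ))) := by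
          fun_prop
        have h2 := this.tendsto 0
        rw [zero_pow (by omega), mul_zero] at h2
        exact h2.mono_left nhdsWithin_le_nhds
      refine h1.congr' ?_
      filter_upwards [self_mem_nhdsWithin] with s hs
      exact (hc2 s hs r n hr).symm
    · refine tendsto_const_nhds.congr' ?_
      filter_upwards [self_mem_nhdsWithin] with s hs
      have := hc1 s hs ⟨r, by omega⟩ n
      simp only [Fin.ext_iff] at this
      exact this.symm
  let P : ℝ → Fin (μ + 1) → ℍ[ℝ] := fun s j => ((ρ * s * t j : ℝ) : ℍ[ℝ])
  have hP : ∀ s, 0 < s → s < 1 → ∀ i, ‖P s i‖ < ρ := by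
    intro s hs hs1 i
    simp only [P, Quaternion.norm_coe, Real.norm_eq_abs]
    rw [abs_of_nonneg (mul_nonneg (by positivity) (ht0 i))]
    calc ρ * s * t i ≤ ρ * s * 1 := by gcongr; exact ht1 i
      _ < ρ := by nlinarith
  let b : ℝ → Fin (μ + 1) → Fin (μ + 1) → ℍ[ℝ] := fun s i n =>
    ((B i n / (ρ * s) ^ (n : ℕ) : ℝ) : ℍ[ℝ])
  let F : ℝ → Matrix (Fin (μ + 1) × Fin N) (Fin (μ + 1) × Fin N) ℍ[ℝ] := fun s n m =>
    ∑ i, ∑ j, star (b s i n.1) * gram (kerK a) (P s) (i, n.2) (j, m.2) * b s j m.1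
  have hbc : ∀ s r n, ∑ i, b s i n * P s i ^ r = ((c s r n : ℝ) : ℍ[ℝ]) := by
    intro s r n
    simp only [b, P, c, u, Finset.mul_sum, Finset.sum_div]
    have hsumc := map_sum (algebraMap ℝ ℍ[ℝ])
      (fun j => (ρ * s) ^ r * (t j ^ r * B j n) / (ρ * s) ^ (n : ℕ)) Finset.univ
    refine Eq.trans ?_ hsumc.symm
    refine Finset.sum_congr rfl fun i _ => ?_
    change _ = (((ρ * s) ^ r * (t i ^ r * B i n) / (ρ * s) ^ (n : ℕ) : ℝ) : ℍ[ℝ])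
    rw [← Quaternion.coe_pow, ← Quaternion.coe_mul, mul_pow (ρ * s)]
    congr 1
    ring
  have hbc' : ∀ s r n, ∑ i, star (P s i) ^ r * b s i n = ((c s r n : ℝ) : ℍ[ℝ]) := by
    intro s r n
    rw [← hbc]
    refine Finset.sum_congr rfl fun i _ => ?_
    simp only [P, Quaternion.star_coe, b]
    rw [Quaternion.coe_commutes]
  have hFs : ∀ s, 0 < s → s < 1 → ∀ n x m y, F s (n, x) (m, y) =
      ∑' lr : ℕ × ℕ, ((c s lr.1 n : ℝ) : ℍ[ℝ]) * a lr.1 lr.2 x y * ((c s lr.2 m : ℝ) : ℍ[ℝ]) := by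
    intro s hs hs1 n x m y
    have hS : ∀ i j, Summable fun lr : ℕ × ℕ =>
        P s i ^ lr.1 * a lr.1 lr.2 x y * (star (P s j)) ^ lr.2 := fun i j =>
      entry_summable a hρ hsum x y _ _ (hP s hs hs1 i) (hP s hs hs1 j)
    have hH : HasSum (fun lr : ℕ × ℕ => ∑ i, ∑ j, star (b s i n) *
        (P s i ^ lr.1 * a lr.1 lr.2 x y * (star (P s j)) ^ lr.2) * b s j m) (F s (n, x) (m, y)) :=
      hasSum_sum fun i _ => hasSum_sum fun j _ =>
        ((hS i j).hasSum.mul_left (star (b s i n))).mul_right (b s j m)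
    rw [← hH.tsum_eq]
    refine tsum_congr fun lr => ?_
    rw [← hbc, ← hbc', Finset.sum_mul, Finset.sum_mul]
    refine Finset.sum_congr rfl fun i _ => ?_
    rw [Finset.mul_sum]
    refine Finset.sum_congr rfl fun j _ => ?_
    simp only [b, Quaternion.star_coe, mul_assoc]
  have hIoo : ∀ᶠ s : ℝ in nhdsWithin 0 (Set.Ioi 0), s ∈ Set.Ioo (0 : ℝ) 1 :=
    Ioo_mem_nhdsGT one_pos
  have hev := negIndex_lsc (blockA a μ) (nhdsWithin 0 (Set.Ioi 0)) F (by
    rintro ⟨n, x⟩ ⟨m, y⟩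
    have hlim : (∑' lr : ℕ × ℕ, (((if lr.1 = (n : ℕ) then 1 else 0 : ℝ)) : ℍ[ℝ]) *
        a lr.1 lr.2 x y * (((if lr.2 = (m : ℕ) then 1 else 0 : ℝ)) : ℍ[ℝ])) =
        blockA a μ (n, x) (m, y) := by
      rw [tsum_eq_single ((n : ℕ), (m : ℕ))]
      · simp [blockA]
      · rintro ⟨r, r'⟩ h
        by_cases h1 : r = (n : ℕ)
        · have h2 : r' ≠ (m : ℕ) := fun h2 => h (by rw [h1, h2])
          simp [h2]
        · simp [h1]
    rw [← hlim]
    have hcc : Continuous (fun r : ℝ => (r : ℍ[ℝ])) := Quaternion.continuous_coe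
    refine (tendsto_tsum_of_dominated_convergence (hsum.mul_left (C n * C m))
      (f := fun s lr => ((c s lr.1 n : ℝ) : ℍ[ℝ]) * a lr.1 lr.2 x y * ((c s lr.2 m : ℝ) : ℍ[ℝ]))
      ?_ ?_).congr' ?_
    · rintro ⟨r, r'⟩
      exact (((hcc.tendsto _).comp (hclim r n)).mul_const _).mul
        ((hcc.tendsto _).comp (hclim r' m))
    · filter_upwards [hIoo] with s hs lr
      refine entry_bound a hρ (hC0 n) x y _ _ _ _ ?_ ?_
      · rw [Quaternion.norm_coe]; exact hcb s hs.1 hs.2 _ _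
      · rw [Quaternion.norm_coe]; exact hcb s hs.1 hs.2 _ _
    · filter_upwards [hIoo] with s hs
      exact (hFs s hs.1 hs.2 n x m y).symm)
  obtain ⟨s, hs, hs'⟩ := (hev.and hIoo).exists
  refine ⟨P s, hP s hs'.1 hs'.2, hs.trans ?_⟩
  exact negIndex_block_le _ (b s) (F s) fun _ _ _ _ => rfl

end helpers

/-- **Proposition**: for a Hermitian kernel `K(p,q) = Σ pⁿ a_{n,m} q̄^m` converging on
the ball `B_ρ`, `K` has `κ` negative squares in `B_ρ` if and only if all the finite
block matrices `A_μ = (a_{n,m})_{n,m≤μ}` satisfy `ν₋(A_μ) ≤ κ`, with equality for at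
least one `μ`. -/
theorem negSquares_iff_blockMatrices {N : ℕ} (a : ℕ → ℕ → Matrix (Fin N) (Fin N) ℍ[ℝ])
    (ha : ∀ n m, a n m = (a m n)ᴴ) (ρ : ℝ) (hρ : 0 < ρ)
    (hsum : Summable fun nm : ℕ × ℕ => ‖a nm.1 nm.2‖ * ρ ^ (nm.1 + nm.2))
    (κ : ℕ) :
    hasNegSquares a ρ κ ↔
      ((∀ μ : ℕ, negIndex (blockA a μ) ≤ κ) ∧ ∃ μ : ℕ, negIndex (blockA a μ) = κ) := by
  constructor
  · rintro ⟨h1, k, p, hp, h2⟩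
    have hle : ∀ μ, negIndex (blockA a μ) ≤ κ := fun μ => by
      obtain ⟨q, hq, h⟩ := block_le_gram a hρ hsum μ
      exact h.trans (h1 _ q hq)
    obtain ⟨μ, hμ⟩ := gram_le_block a hρ hsum p hp
    exact ⟨hle, μ, le_antisymm (hle μ) (h2 ▸ hμ)⟩
  · rintro ⟨h1, μ, h2⟩
    have hle : ∀ (k : ℕ) (p : Fin k → ℍ[ℝ]), (∀ i, ‖p i‖ < ρ) →
        negIndex (gram (kerK a) p) ≤ κ := fun k p hp => by
      obtain ⟨μ, h⟩ := gram_le_block a hρ hsum p hp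
      exact h.trans (h1 μ)
    obtain ⟨q, hq, h⟩ := block_le_gram a hρ hsum μ
    exact ⟨hle, _, q, hq, le_antisymm (hle _ q hq) (h2 ▸ h)⟩
end

section
/- Proposition: The number of negative squares of K is independent of the ball on which it is computed: for every r, r' with 0 < r ≤ ρ and 0 < r' ≤ ρ, the supremum of ν₋(G(p₁,…,p_k)) over all finite tuples p₁,…,p_k ∈ B_r equals the supremum of ν₋(G(p₁,…,p_k)) over all finite tuples p₁,…,p_k ∈ B_{r'}. In particular, K has κ negative squares in B_r if and only if it has κ negative squares in B_{r'}. -/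
/- Setting: quaternionic hermitian kernels of the form `K(p,q) = Σ pⁿ a_{n,m} q̄^m`.
Column vectors `ι → ℍ` form a right `ℍ`-vector space (a module over `ℍᵐᵒᵖ`).  For a
Hermitian matrix `H`, `v* H v = star v ⬝ᵥ H.mulVec v` is real, and the negativity
index `ν₋(H)` is the largest dimension of a right subspace on which the quadratic
form `v ↦ (v* H v).re` is negative definite. -/

open Quaternion MulOpposite Matrix

attribute [local instance] Matrix.normedAddCommGroup

/-- The supremum (in `ℕ∞`) of the negativity indices of the Gram block matrices of the
kernel `K` over all finite tuples of points of the ball `B_r`. -/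
noncomputable def negSup {N : ℕ} (a : ℕ → ℕ → Matrix (Fin N) (Fin N) ℍ[ℝ]) (r : ℝ) : ℕ∞ :=
  sSup {d : ℕ∞ | ∃ (k : ℕ) (p : Fin k → ℍ[ℝ]),
    (∀ i, ‖p i‖ < r) ∧ d = (negIndex (gram (kerK a) p) : ℕ∞)}

/-- right-linear map attached to a matrix -/
noncomputable def mvL {ι κ : Type*} [Fintype ι] (L : Matrix κ ι ℍ[ℝ]) :
    (ι → ℍ[ℝ]) →ₗ[ℍ[ℝ]ᵐᵒᵖ] (κ → ℍ[ℝ]) where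
  toFun v := L.mulVec v
  map_add' _ _ := Matrix.mulVec_add _ _ _
  map_smul' _ _ := Matrix.mulVec_smul _ _ _

theorem finite_op : Module.Finite ℍ[ℝ]ᵐᵒᵖ ℍ[ℝ] := by
  refine ⟨⟨{1}, ?_⟩⟩
  rw [eq_top_iff]
  intro x _
  have : x = (op x) • (1 : ℍ[ℝ]) := by simp
  rw [this]
  apply Submodule.smul_mem
  apply Submodule.subset_span
  simp

theorem form_smul {ι : Type*} [Fintype ι] (H : Matrix ι ι ℍ[ℝ]) (v : ι → ℍ[ℝ]) (t : ℝ) :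
    (star (t • v) ⬝ᵥ H.mulVec (t • v)).re = t ^ 2 * (star v ⬝ᵥ H.mulVec v).re := by
  have h : star (t • v) = t • star v := by
    funext i
    simp only [Pi.star_apply, Pi.smul_apply, Quaternion.star_smul]
  rw [Matrix.mulVec_smul, h, smul_dotProduct, dotProduct_smul]
  simp
  ring

theorem form_cont {ι : Type*} [Fintype ι] (H : Matrix ι ι ℍ[ℝ]) :
    Continuous fun v : ι → ℍ[ℝ] => (star v ⬝ᵥ H.mulVec v).re := by
  apply Quaternion.continuous_re.comp
  simp only [dotProduct, Matrix.mulVec]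
  fun_prop

theorem real_smul_mem {ι : Type*} (W : Submodule ℍ[ℝ]ᵐᵒᵖ (ι → ℍ[ℝ])) (t : ℝ)
    (v : ι → ℍ[ℝ]) (hv : v ∈ W) : t • v ∈ W := by
  have : t • v = (op (t : ℍ[ℝ])) • v := by
    funext i
    simp [Quaternion.coe_commutes, ← Quaternion.coe_mul_eq_smul]
  rw [this]
  exact W.smul_mem _ hv

theorem neg_coercive {ι : Type*} [Fintype ι] (H : Matrix ι ι ℍ[ℝ])
    (W : Submodule ℍ[ℝ]ᵐᵒᵖ (ι → ℍ[ℝ]))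
    (hW : ∀ v ∈ W, v ≠ 0 → (star v ⬝ᵥ H.mulVec v).re < 0) :
    ∃ c : ℝ, 0 < c ∧ ∀ v ∈ W, (star v ⬝ᵥ H.mulVec v).re ≤ - c * ‖v‖ ^ 2 := by
  let WR : Submodule ℝ (ι → ℍ[ℝ]) :=
    { carrier := W
      add_mem' := fun ha hb => W.add_mem ha hb
      zero_mem' := W.zero_mem
      smul_mem' := fun t v hv => real_smul_mem W t v hv }
  have hcl : IsClosed (W : Set (ι → ℍ[ℝ])) := WR.closed_of_finiteDimensional
  have hcomp : IsCompact (Metric.sphere (0 : ι → ℍ[ℝ]) 1 ∩ (W : Set (ι → ℍ[ℝ]))) := by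
    have : ProperSpace (ι → ℍ[ℝ]) := FiniteDimensional.proper ℝ _
    exact (isCompact_sphere _ _).inter_right hcl
  by_cases hne : (Metric.sphere (0 : ι → ℍ[ℝ]) 1 ∩ (W : Set (ι → ℍ[ℝ]))).Nonempty
  · obtain ⟨x, hx, hmax⟩ := hcomp.exists_isMaxOn hne (form_cont H).continuousOn
    have hx1 : ‖x‖ = 1 := by simpa using hx.1
    have hx0 : x ≠ 0 := by
      rintro rfl
      simp at hx1
    refine ⟨-(star x ⬝ᵥ H.mulVec x).re, by linarith [hW x hx.2 hx0], ?_⟩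
    intro v hv
    by_cases hv0 : v = 0
    · subst hv0; simp
    have hn : 0 < ‖v‖ := norm_pos_iff.mpr hv0
    have h1 : ‖v‖⁻¹ • v ∈ (Metric.sphere (0 : ι → ℍ[ℝ]) 1 ∩ (W : Set (ι → ℍ[ℝ]))) := by
      refine ⟨?_, real_smul_mem W _ _ hv⟩
      simp [norm_smul, hn.ne']
    have h2 := hmax h1
    simp only [Set.mem_ofPred_eq] at h2
    rw [form_smul] at h2
    have h3 := mul_le_mul_of_nonneg_right h2 (sq_nonneg ‖v‖)
    have h4 : ‖v‖⁻¹ ^ 2 * (star v ⬝ᵥ H.mulVec v).re * ‖v‖ ^ 2 = (star v ⬝ᵥ H.mulVec v).re := by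
      field_simp
    rw [h4] at h3
    linarith
  · refine ⟨1, one_pos, ?_⟩
    intro v hv
    by_cases hv0 : v = 0
    · subst hv0; simp
    exfalso
    apply hne
    have hn : 0 < ‖v‖ := norm_pos_iff.mpr hv0
    refine ⟨‖v‖⁻¹ • v, ?_, real_smul_mem W _ _ hv⟩
    simp [norm_smul, hn.ne']

theorem negIndex_stable {ι : Type*} [Fintype ι] (H : Matrix ι ι ℍ[ℝ]) :
    ∃ c : ℝ, 0 < c ∧ ∀ (k N : ℕ) (H' : Matrix (Fin k × Fin N) (Fin k × Fin N) ℍ[ℝ])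
      (f : (ι → ℍ[ℝ]) →ₗ[ℍ[ℝ]ᵐᵒᵖ] (Fin k × Fin N → ℍ[ℝ])),
      (∀ v, ‖star (f v) ⬝ᵥ H'.mulVec (f v) - star v ⬝ᵥ H.mulVec v‖ ≤ c * ‖v‖ ^ 2) →
      negIndex H ≤ negIndex H' := by
  have := finite_op
  have hmem := Nat.sSup_mem (s := {d : ℕ | ∃ W : Submodule ℍ[ℝ]ᵐᵒᵖ (ι → ℍ[ℝ]),
      Module.finrank ℍ[ℝ]ᵐᵒᵖ W = d ∧
      ∀ v ∈ W, v ≠ 0 → (star v ⬝ᵥ H.mulVec v).re < 0})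
      ⟨0, ⊥, by simp, by simp⟩ (negIndex_bdd H)
  obtain ⟨W, hWd, hW⟩ := hmem
  obtain ⟨c, hc, hcW⟩ := neg_coercive H W hW
  refine ⟨c / 2, by linarith, ?_⟩
  intro k N H' f hf
  have hneg : ∀ v ∈ W, v ≠ 0 → (star (f v) ⬝ᵥ H'.mulVec (f v)).re < 0 := by
    intro v hv hv0
    have h1 := hf v
    have h2 := hcW v hv
    have h3 : (star (f v) ⬝ᵥ H'.mulVec (f v) - star v ⬝ᵥ H.mulVec v).re ≤
      ‖star (f v) ⬝ᵥ H'.mulVec (f v) - star v ⬝ᵥ H.mulVec v‖ := by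
      have := real_inner_le_norm (star (f v) ⬝ᵥ H'.mulVec (f v) - star v ⬝ᵥ H.mulVec v) 1
      rw [Quaternion.inner_def] at this
      simpa using this
    rw [Quaternion.re_sub] at h3
    have hn : 0 < ‖v‖ ^ 2 := pow_pos (norm_pos_iff.mpr hv0) 2
    nlinarith
  have hinj : Function.Injective (f.domRestrict W) := by
    rw [injective_iff_map_eq_zero]
    intro v hv
    by_contra hne
    have h := hneg v v.2 (by simpa using hne)
    rw [LinearMap.domRestrict_apply] at hv
    rw [hv] at h
    simp at h
  change sSup _ ≤ sSup _
  rw [← hWd]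
  apply le_csSup (negIndex_bdd H')
  refine ⟨LinearMap.range (f.domRestrict W), LinearMap.finrank_range_of_inj hinj, ?_⟩
  rintro _ ⟨v, rfl⟩ hv0
  apply hneg v v.2
  rintro h
  apply hv0
  rw [LinearMap.domRestrict_apply, h, map_zero]

/-- the (n,m) qterm of the form -/
noncomputable def qterm {N : ℕ} (a : ℕ → ℕ → Matrix (Fin N) (Fin N) ℍ[ℝ])
    (u : ℕ → Fin N → ℍ[ℝ]) (nm : ℕ × ℕ) : ℍ[ℝ] :=
  ∑ i, ∑ j, star (u nm.1 i) * a nm.1 nm.2 i j * u nm.2 j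

theorem term_le {N : ℕ} (a : ℕ → ℕ → Matrix (Fin N) (Fin N) ℍ[ℝ])
    (u : ℕ → Fin N → ℍ[ℝ]) (nm : ℕ × ℕ) (B : ℝ)
    (hB : ∀ i j, ‖u nm.1 i‖ * ‖u nm.2 j‖ ≤ B) :
    ‖qterm a u nm‖ ≤ N ^ 2 * (‖a nm.1 nm.2‖ * B) := by
  unfold qterm
  calc _ ≤ ∑ i : Fin N, ∑ j : Fin N, ‖a nm.1 nm.2‖ * B := by
        refine (norm_sum_le _ _).trans (Finset.sum_le_sum fun i _ => ?_)
        refine (norm_sum_le _ _).trans (Finset.sum_le_sum fun j _ => ?_)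
        rw [norm_mul, norm_mul, norm_star]
        have h1 := Matrix.norm_entry_le_entrywise_sup_norm (a nm.1 nm.2) (i := i) (j := j)
        have h2 := hB i j
        calc _ = ‖a nm.1 nm.2 i j‖ * (‖u nm.1 i‖ * ‖u nm.2 j‖) := by ring
          _ ≤ _ := by gcongr
    _ = _ := by simp; ring

theorem term_summable {N : ℕ} (a : ℕ → ℕ → Matrix (Fin N) (Fin N) ℍ[ℝ])
    (ρ : ℝ) (hρ : 0 < ρ)
    (hsum : Summable fun nm : ℕ × ℕ => ‖a nm.1 nm.2‖ * ρ ^ (nm.1 + nm.2))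
    (u : ℕ → Fin N → ℍ[ℝ]) (C : ℝ) (hu : ∀ n i, ‖u n i‖ ≤ C * ρ ^ n) :
    Summable (qterm a u) := by
  refine Summable.of_norm_bounded (g := fun nm => N ^ 2 * C ^ 2 *
    (‖a nm.1 nm.2‖ * ρ ^ (nm.1 + nm.2))) (hsum.mul_left _) ?_
  intro nm
  refine (term_le a u nm (C ^ 2 * ρ ^ (nm.1 + nm.2)) ?_).trans (le_of_eq (by ring))
  intro i j
  calc _ ≤ (C * ρ ^ nm.1) * (C * ρ ^ nm.2) :=
        mul_le_mul (hu _ _) (hu _ _) (norm_nonneg _) ((norm_nonneg _).trans (hu nm.1 i))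
    _ = _ := by ring

theorem kerK_summable {N : ℕ} (a : ℕ → ℕ → Matrix (Fin N) (Fin N) ℍ[ℝ])
    (ρ : ℝ) (hsum : Summable fun nm : ℕ × ℕ => ‖a nm.1 nm.2‖ * ρ ^ (nm.1 + nm.2))
    (p q : ℍ[ℝ]) (hp : ‖p‖ ≤ ρ) (hq : ‖q‖ ≤ ρ) (i j : Fin N) :
    Summable fun nm : ℕ × ℕ => p ^ nm.1 * a nm.1 nm.2 i j * (star q) ^ nm.2 := by
  refine Summable.of_norm_bounded hsum ?_
  intro nm
  rw [norm_mul, norm_mul, norm_pow, norm_pow, norm_star]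
  have h1 := Matrix.norm_entry_le_entrywise_sup_norm (a nm.1 nm.2) (i := i) (j := j)
  have h0 : 0 ≤ ρ := (norm_nonneg _).trans hp
  calc _ ≤ ρ ^ nm.1 * ‖a nm.1 nm.2‖ * ρ ^ nm.2 := by gcongr
    _ = _ := by ring

/-- moments of `v` at the points `p` -/
noncomputable def mom {N k : ℕ} (p : Fin k → ℍ[ℝ]) (v : Fin k × Fin N → ℍ[ℝ])
    (n : ℕ) (i : Fin N) : ℍ[ℝ] := ∑ l, (star (p l)) ^ n * v (l, i)

theorem gram_form {N k : ℕ} (a : ℕ → ℕ → Matrix (Fin N) (Fin N) ℍ[ℝ])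
    (ρ : ℝ) (hsum : Summable fun nm : ℕ × ℕ => ‖a nm.1 nm.2‖ * ρ ^ (nm.1 + nm.2))
    (p : Fin k → ℍ[ℝ]) (hp : ∀ l, ‖p l‖ ≤ ρ) (v : Fin k × Fin N → ℍ[ℝ]) :
    star v ⬝ᵥ (gram (kerK a) p).mulVec v = ∑' nm, qterm a (mom p v) nm := by
  have hs : ∀ x y : Fin k × Fin N, Summable fun nm : ℕ × ℕ => star (v x) *
      (p x.1 ^ nm.1 * a nm.1 nm.2 x.2 y.2 * (star (p y.1)) ^ nm.2 * v y) := fun x y =>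
    ((kerK_summable a ρ hsum _ _ (hp x.1) (hp y.1) x.2 y.2).mul_right _).mul_left _
  have h1 : star v ⬝ᵥ (gram (kerK a) p).mulVec v = ∑ x, ∑ y, ∑' nm : ℕ × ℕ, star (v x) *
      (p x.1 ^ nm.1 * a nm.1 nm.2 x.2 y.2 * (star (p y.1)) ^ nm.2 * v y) := by
    simp only [dotProduct, Matrix.mulVec, _root_.gram, kerK, Pi.star_apply]
    refine Finset.sum_congr rfl fun x _ => ?_
    rw [Finset.mul_sum]
    refine Finset.sum_congr rfl fun y _ => ?_
    rw [tsum_mul_left, tsum_mul_right]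
  rw [h1]
  have h2 : ∀ x : Fin k × Fin N, ∑ y, ∑' nm : ℕ × ℕ, star (v x) *
      (p x.1 ^ nm.1 * a nm.1 nm.2 x.2 y.2 * (star (p y.1)) ^ nm.2 * v y) =
      ∑' nm : ℕ × ℕ, ∑ y, star (v x) *
      (p x.1 ^ nm.1 * a nm.1 nm.2 x.2 y.2 * (star (p y.1)) ^ nm.2 * v y) := fun x =>
    (Summable.tsum_finsetSum fun y _ => hs x y).symm
  simp_rw [h2]
  rw [← Summable.tsum_finsetSum fun x _ => summable_sum fun y _ => hs x y]
  congr 1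
  funext nm
  simp only [qterm, mom, star_sum, star_mul, star_pow, star_star, Finset.sum_mul, Finset.mul_sum,
    Fintype.sum_prod_type]
  rw [Finset.sum_comm]
  refine Finset.sum_congr rfl fun i _ => ?_
  trans ∑ l, ∑ j, ∑ l', star (v (l, i)) * (p l ^ nm.1 * a nm.1 nm.2 i j * star (p l') ^ nm.2 * v (l', j))
  · exact Finset.sum_congr rfl fun l _ => Finset.sum_comm
  rw [Finset.sum_comm]
  refine Finset.sum_congr rfl fun j _ => ?_
  rw [Finset.sum_comm]
  refine Finset.sum_congr rfl fun l _ => ?_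
  refine Finset.sum_congr rfl fun l' _ => ?_
  simp only [mul_assoc]

/-- truncated coefficient matrix -/
def coefM {N : ℕ} (a : ℕ → ℕ → Matrix (Fin N) (Fin N) ℍ[ℝ]) (M : ℕ) :
    Matrix (Fin M × Fin N) (Fin M × Fin N) ℍ[ℝ] := fun x y => a x.1 y.1 x.2 y.2

theorem coef_form {N : ℕ} (a : ℕ → ℕ → Matrix (Fin N) (Fin N) ℍ[ℝ]) (M : ℕ)
    (u : ℕ → Fin N → ℍ[ℝ]) (w : Fin M × Fin N → ℍ[ℝ]) (hw : ∀ x, w x = u x.1 x.2) :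
    star w ⬝ᵥ (coefM a M).mulVec w =
      ∑ nm ∈ Finset.range M ×ˢ Finset.range M, qterm a u nm := by
  rw [Finset.sum_product]
  simp only [dotProduct, Matrix.mulVec, coefM, Pi.star_apply, hw, qterm, Fintype.sum_prod_type,
    Finset.mul_sum]
  rw [Finset.sum_range]
  refine Finset.sum_congr rfl fun n _ => ?_
  rw [Finset.sum_range, Finset.sum_comm]
  rw [Finset.sum_comm]
  trans ∑ i, ∑ m : Fin M, ∑ j, star (u n i) * (a n m i j * u m j)
  · rfl
  rw [Finset.sum_comm]
  simp only [mul_assoc]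

theorem tail_bound {N : ℕ} (a : ℕ → ℕ → Matrix (Fin N) (Fin N) ℍ[ℝ])
    (ρ : ℝ) (hρ : 0 < ρ)
    (hsum : Summable fun nm : ℕ × ℕ => ‖a nm.1 nm.2‖ * ρ ^ (nm.1 + nm.2))
    (u : ℕ → Fin N → ℍ[ℝ]) (C : ℝ) (hu : ∀ n i, ‖u n i‖ ≤ C * ρ ^ n)
    (s : Finset (ℕ × ℕ)) (D : ℝ)
    (hD : ∀ nm ∉ s, ∀ i j, ‖u nm.1 i‖ * ‖u nm.2 j‖ ≤ D * ρ ^ (nm.1 + nm.2)) :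
    ‖∑' nm, qterm a u nm - ∑ nm ∈ s, qterm a u nm‖ ≤
      N ^ 2 * D * ∑' nm : {x // x ∉ s}, ‖a nm.1.1 nm.1.2‖ * ρ ^ (nm.1.1 + nm.1.2) := by
  have h := (term_summable a ρ hρ hsum u C hu).sum_add_tsum_subtype_compl s
  rw [← h, add_sub_cancel_left, ← tsum_mul_left]
  refine tsum_of_norm_bounded (g := fun nm : {x // x ∉ s} => N ^ 2 * D *
    (‖a nm.1.1 nm.1.2‖ * ρ ^ (nm.1.1 + nm.1.2))) ?_ ?_
  · exact ((hsum.subtype _).mul_left _).hasSum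
  · intro nm
    exact (term_le a u nm.1 _ (hD nm.1 nm.2)).trans (le_of_eq (by ring))

theorem coe_sum_aux {M : ℕ} (g : Fin M → ℝ) :
    ((∑ l, g l : ℝ) : ℍ[ℝ]) = ∑ l, ((g l : ℝ) : ℍ[ℝ]) :=
  map_sum (algebraMap ℝ ℍ[ℝ]) g Finset.univ

theorem mom_le {N k : ℕ} (p : Fin k → ℍ[ℝ]) (ρ : ℝ) (hp : ∀ l, ‖p l‖ ≤ ρ)
    (v : Fin k × Fin N → ℍ[ℝ]) (n : ℕ) (i : Fin N) :
    ‖mom p v n i‖ ≤ k * ‖v‖ * ρ ^ n := by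
  unfold mom
  calc _ ≤ ∑ l : Fin k, ρ ^ n * ‖v‖ := by
        refine (norm_sum_le _ _).trans (Finset.sum_le_sum fun l _ => ?_)
        rw [norm_mul, norm_pow, norm_star]
        have h0 : 0 ≤ ρ := (norm_nonneg _).trans (hp l)
        have h1 := hp l
        have h2 := norm_le_pi_norm v (l, i)
        gcongr
    _ = _ := by simp; ring

theorem step_one {N k : ℕ} (a : ℕ → ℕ → Matrix (Fin N) (Fin N) ℍ[ℝ])
    (ρ : ℝ) (hρ : 0 < ρ)
    (hsum : Summable fun nm : ℕ × ℕ => ‖a nm.1 nm.2‖ * ρ ^ (nm.1 + nm.2))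
    (p : Fin k → ℍ[ℝ]) (hp : ∀ l, ‖p l‖ ≤ ρ) :
    ∃ M, negIndex (_root_.gram (kerK a) p) ≤ negIndex (coefM a M) := by
  obtain ⟨c, hc, hst⟩ := negIndex_stable (_root_.gram (kerK a) p)
  have ht := tendsto_tsum_compl_atTop_zero
    (fun nm : ℕ × ℕ => ‖a nm.1 nm.2‖ * ρ ^ (nm.1 + nm.2))
  have ht2 := ht.const_mul ((N : ℝ) ^ 2 * (k : ℝ) ^ 2)
  rw [mul_zero] at ht2
  have hev := ht2.eventually (gt_mem_nhds hc)
  obtain ⟨s0, hs0⟩ := Filter.eventually_atTop.mp hev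
  obtain ⟨M, hM⟩ : ∃ M : ℕ, s0 ⊆ Finset.range M ×ˢ Finset.range M := by
    refine ⟨(s0.sup fun x => x.1 + x.2) + 1, fun x hx => ?_⟩
    have := Finset.le_sup (f := fun x : ℕ × ℕ => x.1 + x.2) hx
    simp only [Finset.mem_product, Finset.mem_range]
    omega
  have hlt := hs0 _ hM
  refine ⟨M, hst M N _ (mvL fun x y => if x.2 = y.2 then star (p y.1) ^ (x.1 : ℕ) else 0) ?_⟩
  intro v
  rw [gram_form a ρ hsum p hp v, coef_form a M (mom p v), norm_sub_rev]
  · refine (tail_bound a ρ hρ hsum (mom p v) (k * ‖v‖) (mom_le p ρ hp v) _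
      ((k : ℝ) ^ 2 * ‖v‖ ^ 2) ?_).trans ?_
    · intro nm _ i j
      calc _ ≤ (k * ‖v‖ * ρ ^ nm.1) * (k * ‖v‖ * ρ ^ nm.2) := by
            gcongr <;> exact mom_le p ρ hp v _ _
        _ = _ := by ring
    · have := mul_le_mul_of_nonneg_right hlt.le (sq_nonneg ‖v‖)
      refine le_trans (le_of_eq ?_) this
      ring
  · intro x
    simp only [mvL, LinearMap.coe_mk, AddHom.coe_mk, Matrix.mulVec, dotProduct, mom,
      Fintype.sum_prod_type]
    simp

theorem step_two {N : ℕ} (a : ℕ → ℕ → Matrix (Fin N) (Fin N) ℍ[ℝ])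
    (ρ : ℝ) (hρ : 0 < ρ)
    (hsum : Summable fun nm : ℕ × ℕ => ‖a nm.1 nm.2‖ * ρ ^ (nm.1 + nm.2))
    (r : ℝ) (hr : 0 < r) (M : ℕ) :
    ∃ p : Fin M → ℍ[ℝ], (∀ l, ‖p l‖ < r) ∧
      negIndex (coefM a M) ≤ negIndex (_root_.gram (kerK a) p) := by
  obtain ⟨c, hc, hst⟩ := negIndex_stable (coefM a M)
  -- nodes
  obtain ⟨x, hxinj, hxρ⟩ : ∃ x : Fin M → ℝ, Function.Injective x ∧ ∀ l, |x l| ≤ ρ := by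
    refine ⟨fun l => ρ * ((l : ℕ) / (M : ℝ)), ?_, ?_⟩
    · intro i j hij
      have hM : (M : ℝ) ≠ 0 := by
        have := i.pos
        positivity
      have h2 := mul_left_cancel₀ hρ.ne' hij
      rw [div_left_inj' hM] at h2
      exact Fin.ext (by exact_mod_cast h2)
    · intro l
      have hM : (0 : ℝ) < M := by exact_mod_cast l.pos
      have h1 : ((l : ℕ) : ℝ) / M ≤ 1 := by
        rw [div_le_one hM]
        exact_mod_cast l.2.le
      rw [abs_of_nonneg (by positivity)]
      nlinarith
  -- inverse Vandermonde
  obtain ⟨L, hL⟩ : ∃ L : Matrix (Fin M) (Fin M) ℝ,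
      ∀ n m : Fin M, ∑ l, x l ^ (n : ℕ) * L l m = if n = m then 1 else 0 := by
    have hdet : IsUnit (Matrix.vandermonde x)ᵀ.det := by
      rw [Matrix.det_transpose, isUnit_iff_ne_zero]
      exact Matrix.det_vandermonde_ne_zero_iff.mpr hxinj
    refine ⟨((Matrix.vandermonde x)ᵀ)⁻¹, fun n m => ?_⟩
    have := congrFun (congrFun (Matrix.mul_nonsing_inv _ hdet) n) m
    rw [Matrix.mul_apply, Matrix.one_apply] at this
    simpa [Matrix.vandermonde] using this
  set S : ℝ := ∑' nm : ℕ × ℕ, ‖a nm.1 nm.2‖ * ρ ^ (nm.1 + nm.2) with hS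
  have hS0 : 0 ≤ S := tsum_nonneg fun nm => by positivity
  set C0 : ℝ := ∑ l, ∑ m, |L l m| with hC0
  have hC00 : 0 ≤ C0 := Finset.sum_nonneg fun l _ => Finset.sum_nonneg fun m _ => abs_nonneg _
  set C1 : ℝ := C0 + ∑ n : Fin M, (ρ ^ (n : ℕ))⁻¹ with hC1
  have hC1' : ∀ n : ℕ, n < M → 1 ≤ C1 * ρ ^ n := by
    intro n hn
    have h1 : (ρ ^ n)⁻¹ ≤ ∑ n : Fin M, (ρ ^ (n : ℕ))⁻¹ :=
      Finset.single_le_sum (f := fun n : Fin M => (ρ ^ (n : ℕ))⁻¹)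
        (fun i _ => by positivity) (Finset.mem_univ ⟨n, hn⟩)
    have h2 : (ρ ^ n)⁻¹ ≤ C1 := by linarith
    have h3 : 0 < ρ ^ n := by positivity
    calc (1 : ℝ) = (ρ ^ n)⁻¹ * ρ ^ n := by field_simp
      _ ≤ _ := by gcongr
  have hC01 : C0 ≤ C1 := by
    have : 0 ≤ ∑ n : Fin M, (ρ ^ (n : ℕ))⁻¹ := Finset.sum_nonneg fun n _ => by positivity
    linarith
  have hC10 : 0 ≤ C1 := hC00.trans hC01
  -- scale
  obtain ⟨t, ht0, ht1, htr, htc⟩ : ∃ t : ℝ, 0 < t ∧ t ≤ 1 ∧ t * ρ < r ∧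
      N ^ 2 * (C1 ^ 2 * t) * S ≤ c := by
    have hden : 0 < N ^ 2 * C1 ^ 2 * S + 1 := by positivity
    refine ⟨min 1 (min (r / (2 * ρ)) (c / (N ^ 2 * C1 ^ 2 * S + 1))), ?_, min_le_left _ _, ?_, ?_⟩
    · refine lt_min one_pos (lt_min (by positivity) (by positivity))
    · calc _ ≤ r / (2 * ρ) * ρ := by
            gcongr
            exact (min_le_right _ _).trans (min_le_left _ _)
        _ = r / 2 := by field_simp
        _ < r := by linarith
    · have h1 : min 1 (min (r / (2 * ρ)) (c / (N ^ 2 * C1 ^ 2 * S + 1))) ≤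
        c / (N ^ 2 * C1 ^ 2 * S + 1) := (min_le_right _ _).trans (min_le_right _ _)
      calc _ ≤ N ^ 2 * (C1 ^ 2 * (c / (N ^ 2 * C1 ^ 2 * S + 1))) * S := by gcongr
        _ = c * ((N ^ 2 * C1 ^ 2 * S) / (N ^ 2 * C1 ^ 2 * S + 1)) := by ring
        _ ≤ c * 1 := by
            gcongr
            rw [div_le_one hden]
            linarith
        _ = c := mul_one c
  have hnp : ∀ l, ‖((t * x l : ℝ) : ℍ[ℝ])‖ ≤ t * ρ := by
    intro l
    rw [Quaternion.norm_coe, Real.norm_eq_abs, abs_mul, abs_of_pos ht0]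
    exact mul_le_mul_of_nonneg_left (hxρ l) ht0.le
  have htρ : t * ρ ≤ ρ := by nlinarith
  refine ⟨fun l => ((t * x l : ℝ) : ℍ[ℝ]), fun l => (hnp l).trans_lt htr, ?_⟩
  set p : Fin M → ℍ[ℝ] := fun l => ((t * x l : ℝ) : ℍ[ℝ]) with hp
  set f : (Fin M × Fin N → ℍ[ℝ]) →ₗ[ℍ[ℝ]ᵐᵒᵖ] (Fin M × Fin N → ℍ[ℝ]) :=
    mvL fun z y => if z.2 = y.2 then ((L z.1 y.1 * (t ^ (y.1 : ℕ))⁻¹ : ℝ) : ℍ[ℝ]) else 0 with hf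
  have hfv : ∀ w l i, f w (l, i) =
      ∑ m, ((L l m * (t ^ (m : ℕ))⁻¹ : ℝ) : ℍ[ℝ]) * w (m, i) := by
    intro w l i
    rw [hf]
    simp only [mvL, LinearMap.coe_mk, AddHom.coe_mk, Matrix.mulVec, dotProduct,
      Fintype.sum_prod_type]
    simp
  have hmom : ∀ w n i, mom p (f w) n i =
      ∑ m : Fin M, ((t ^ n * (t ^ (m : ℕ))⁻¹ * ∑ l, x l ^ n * L l m : ℝ) : ℍ[ℝ]) * w (m, i) := by
    intro w n i
    unfold mom
    simp only [hfv, Finset.mul_sum]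
    rw [Finset.sum_comm]
    refine Finset.sum_congr rfl fun m _ => ?_
    rw [coe_sum_aux, Finset.sum_mul]
    refine Finset.sum_congr rfl fun l _ => ?_
    rw [← mul_assoc, hp, Quaternion.star_coe, ← Quaternion.coe_pow,
      ← Quaternion.coe_mul]
    congr 2
    ring
  have hlow : ∀ w (n : Fin M) i, mom p (f w) n i = w (n, i) := by
    intro w n i
    rw [hmom]
    simp only [hL]
    rw [Finset.sum_eq_single n]
    · have : t ^ (n : ℕ) ≠ 0 := by positivity
      simp [this]
    · intro m _ hm
      simp [hm.symm]
    · simp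
  have hhigh : ∀ w (n : ℕ) i, M ≤ n → ‖mom p (f w) n i‖ ≤ t * (C1 * ‖w‖ * ρ ^ n) := by
    intro w n i hn
    rw [hmom]
    calc _ ≤ ∑ m : Fin M, t * (∑ l, ρ ^ n * |L l m|) * ‖w‖ := by
          refine (norm_sum_le _ _).trans (Finset.sum_le_sum fun m _ => ?_)
          rw [norm_mul, Quaternion.norm_coe, Real.norm_eq_abs, abs_mul]
          have h1 : |t ^ n * (t ^ (m : ℕ))⁻¹| ≤ t := by
            rw [abs_of_pos (by positivity)]
            have hlt : (m : ℕ) < n := lt_of_lt_of_le m.2 hn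
            obtain ⟨d, rfl⟩ := Nat.exists_eq_add_of_lt hlt
            have : t ^ ((m : ℕ) + d + 1) * (t ^ (m : ℕ))⁻¹ = t ^ d * t := by
              rw [pow_succ, pow_add]
              field_simp
            rw [this]
            have := pow_le_one₀ (n := d) ht0.le ht1
            nlinarith
          have h2 : |∑ l, x l ^ n * L l m| ≤ ∑ l, ρ ^ n * |L l m| := by
            refine (Finset.abs_sum_le_sum_abs _ _).trans (Finset.sum_le_sum fun l _ => ?_)
            rw [abs_mul, abs_pow]
            have := hxρ l
            gcongr
          have h3 := norm_le_pi_norm w (m, i)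
          gcongr
      _ = t * (C0 * ‖w‖ * ρ ^ n) := by
          rw [hC0, Finset.sum_comm, ← Finset.sum_mul, ← Finset.mul_sum]
          simp only [← Finset.mul_sum]
          ring
      _ ≤ _ := by gcongr
  have hall : ∀ w (n : ℕ) i, ‖mom p (f w) n i‖ ≤ C1 * ‖w‖ * ρ ^ n := by
    intro w n i
    by_cases hn : n < M
    · have h1 := hlow w ⟨n, hn⟩ i
      simp only at h1
      rw [h1]
      have h2 := norm_le_pi_norm w (⟨n, hn⟩, i)
      have h3 := hC1' n hn
      calc _ ≤ 1 * ‖w‖ := by simpa using h2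
        _ ≤ (C1 * ρ ^ n) * ‖w‖ := by gcongr
        _ = _ := by ring
    · refine (hhigh w n i (not_lt.mp hn)).trans ?_
      have : 0 ≤ C1 * ‖w‖ * ρ ^ n := by positivity
      nlinarith
  refine hst M N _ f ?_
  intro w
  rw [gram_form a ρ hsum p (fun l => (hnp l).trans htρ) (f w),
    coef_form a M (mom p (f w)) w (fun z => (hlow w z.1 z.2).symm)]
  refine (tail_bound a ρ hρ hsum (mom p (f w)) (C1 * ‖w‖) (hall w) _
      (C1 ^ 2 * t * ‖w‖ ^ 2) ?_).trans ?_
  · intro nm hnm i j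
    simp only [Finset.mem_product, Finset.mem_range, not_and_or, not_lt] at hnm
    rcases hnm with h | h
    · calc _ ≤ (t * (C1 * ‖w‖ * ρ ^ nm.1)) * (C1 * ‖w‖ * ρ ^ nm.2) :=
            mul_le_mul (hhigh w _ _ h) (hall w _ _) (norm_nonneg _) (by positivity)
        _ = _ := by ring
    · calc _ ≤ (C1 * ‖w‖ * ρ ^ nm.1) * (t * (C1 * ‖w‖ * ρ ^ nm.2)) :=
            mul_le_mul (hall w _ _) (hhigh w _ _ h) (norm_nonneg _) (by positivity)
        _ = _ := by ring
  · have h1 : ∑' nm : {z // z ∉ Finset.range M ×ˢ Finset.range M},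
        ‖a nm.1.1 nm.1.2‖ * ρ ^ (nm.1.1 + nm.1.2) ≤ S :=
      hsum.tsum_subtype_le (fun nm : ℕ × ℕ => ‖a nm.1 nm.2‖ * ρ ^ (nm.1 + nm.2))
        {z | z ∉ Finset.range M ×ˢ Finset.range M} (fun nm => by positivity)
    calc _ ≤ N ^ 2 * (C1 ^ 2 * t * ‖w‖ ^ 2) * S := by gcongr
      _ = N ^ 2 * (C1 ^ 2 * t) * S * ‖w‖ ^ 2 := by ring
      _ ≤ _ := by gcongr

theorem transfer {N k : ℕ} (a : ℕ → ℕ → Matrix (Fin N) (Fin N) ℍ[ℝ])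
    (ρ : ℝ) (hρ : 0 < ρ)
    (hsum : Summable fun nm : ℕ × ℕ => ‖a nm.1 nm.2‖ * ρ ^ (nm.1 + nm.2))
    (r r' : ℝ) (hrρ : r ≤ ρ) (hr' : 0 < r') (p : Fin k → ℍ[ℝ]) (hp : ∀ l, ‖p l‖ < r) :
    ∃ (k' : ℕ) (p' : Fin k' → ℍ[ℝ]), (∀ l, ‖p' l‖ < r') ∧
      negIndex (_root_.gram (kerK a) p) ≤ negIndex (_root_.gram (kerK a) p') := by
  obtain ⟨M, hM⟩ := step_one a ρ hρ hsum p (fun l => (hp l).le.trans hrρ)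
  obtain ⟨p', hp', h⟩ := step_two a ρ hρ hsum r' hr' M
  exact ⟨M, p', hp', hM.trans h⟩

theorem negSup_mono {N : ℕ} (a : ℕ → ℕ → Matrix (Fin N) (Fin N) ℍ[ℝ])
    (ρ : ℝ) (hρ : 0 < ρ)
    (hsum : Summable fun nm : ℕ × ℕ => ‖a nm.1 nm.2‖ * ρ ^ (nm.1 + nm.2))
    (r r' : ℝ) (hrρ : r ≤ ρ) (hr' : 0 < r') : negSup a r ≤ negSup a r' := by
  apply sSup_le
  rintro d ⟨k, p, hp, rfl⟩
  obtain ⟨k', p', hp', h⟩ := transfer a ρ hρ hsum r r' hrρ hr' p hp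
  calc _ ≤ ((negIndex (_root_.gram (kerK a) p') : ℕ) : ℕ∞) := by exact_mod_cast h
    _ ≤ negSup a r' := le_sSup ⟨k', p', hp', rfl⟩

theorem hasNegSquares_imp {N : ℕ} (a : ℕ → ℕ → Matrix (Fin N) (Fin N) ℍ[ℝ])
    (ρ : ℝ) (hρ : 0 < ρ)
    (hsum : Summable fun nm : ℕ × ℕ => ‖a nm.1 nm.2‖ * ρ ^ (nm.1 + nm.2))
    (r r' : ℝ) (hr : 0 < r) (hrρ : r ≤ ρ) (hr' : 0 < r') (hr'ρ : r' ≤ ρ) (κ : ℕ)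
    (h : hasNegSquares a r κ) : hasNegSquares a r' κ := by
  obtain ⟨h1, k, p, hp, hk⟩ := h
  have hb : ∀ (k : ℕ) (p : Fin k → ℍ[ℝ]), (∀ i, ‖p i‖ < r') →
      negIndex (_root_.gram (kerK a) p) ≤ κ := by
    intro k p hp
    obtain ⟨k', p', hp', h⟩ := transfer a ρ hρ hsum r' r hr'ρ hr p hp
    exact h.trans (h1 k' p' hp')
  refine ⟨hb, ?_⟩
  obtain ⟨k', p', hp', h⟩ := transfer a ρ hρ hsum r r' hrρ hr' p hp
  exact ⟨k', p', hp', le_antisymm (hb k' p' hp') (hk ▸ h)⟩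

/-- **Proposition**: the number of negative squares of the kernel
`K(p,q) = Σ pⁿ a_{n,m} q̄^m` is independent of the ball on which it is computed: for
`0 < r ≤ ρ` and `0 < r' ≤ ρ`, the supremum of `ν₋(G(p₁,…,p_k))` over finite tuples in
`B_r` equals the supremum over finite tuples in `B_{r'}`; in particular, `K` has `κ`
negative squares in `B_r` iff it has `κ` negative squares in `B_{r'}`. -/
theorem negSquares_independent_of_ball {N : ℕ}
    (a : ℕ → ℕ → Matrix (Fin N) (Fin N) ℍ[ℝ])
    (ha : ∀ n m, a n m = (a m n)ᴴ) (ρ : ℝ) (hρ : 0 < ρ)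
    (hsum : Summable fun nm : ℕ × ℕ => ‖a nm.1 nm.2‖ * ρ ^ (nm.1 + nm.2))
    (r r' : ℝ) (hr : 0 < r) (hrρ : r ≤ ρ) (hr' : 0 < r') (hr'ρ : r' ≤ ρ) :
    negSup a r = negSup a r' ∧
      ∀ κ : ℕ, (hasNegSquares a r κ ↔ hasNegSquares a r' κ) := by
  refine ⟨le_antisymm (negSup_mono a ρ hρ hsum r r' hrρ hr') (negSup_mono a ρ hρ hsum r' r hr'ρ hr), fun κ => ⟨?_, ?_⟩⟩
  · exact hasNegSquares_imp a ρ hρ hsum r r' hr hrρ hr' hr'ρ κ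
  · exact hasNegSquares_imp a ρ hρ hsum r' r hr' hr'ρ hr hrρ κ
end

section
/- Proposition: Let σ ∈ ℍ^{N×N} be a signature matrix (σ = σ* = σ⁻¹), and let A ∈ ℍ^{M×M} and C ∈ ℍ^{N×M} be such that ⋂_{k≥0} ker(CA^k) = {0} (kernels taken as right-linear maps ℍ^M → ℍ^N). Let P ∈ ℍ^{M×M} be an invertible Hermitian solution of the Stein equation P − A*PA = C*σC. Then there exist matrices B ∈ ℍ^{M×N} and D ∈ ℍ^{N×N} such that the block matrix W := [[A, B], [C, D]] ∈ ℍ^{(M+N)×(M+N)} satisfies W* · diag(P, σ) · W = diag(P, σ), or equivalently W · diag(P⁻¹, σ) · W* = diag(P⁻¹, σ). -/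
open Quaternion Matrix

/-- A Hermitian matrix that is diagonalizable by congruence. -/
def GoodDiag {ι : Type} [Fintype ι] [DecidableEq ι] (P : Matrix ι ι ℍ[ℝ]) : Prop :=
  ∃ R R' : Matrix ι ι ℍ[ℝ], R * R' = 1 ∧ R' * R = 1 ∧ (Rᴴ * P * R).IsDiag

theorem GoodDiag.congr {ι : Type} [Fintype ι] [DecidableEq ι] {P L L' : Matrix ι ι ℍ[ℝ]}
    (h1 : L * L' = 1) (h2 : L' * L = 1) (h : GoodDiag (Lᴴ * P * L)) : GoodDiag P := by
  obtain ⟨R, R', a, b, c⟩ := h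
  refine ⟨L * R, R' * L', ?_, ?_, ?_⟩
  · calc L * R * (R' * L') = L * (R * R') * L' := by simp only [Matrix.mul_assoc]
      _ = 1 := by rw [a, Matrix.mul_one, h1]
  · calc R' * L' * (L * R) = R' * (L' * L) * R := by simp only [Matrix.mul_assoc]
      _ = 1 := by rw [h2, Matrix.mul_one, b]
  · simpa only [conjTranspose_mul, Matrix.mul_assoc] using c

theorem GoodDiag.of_submatrix {ι κ : Type} [Fintype ι] [DecidableEq ι] [Fintype κ] [DecidableEq κ]
    {P : Matrix ι ι ℍ[ℝ]} (e : κ ≃ ι) (h : GoodDiag (P.submatrix e e)) : GoodDiag P := by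
  obtain ⟨R, R', a, b, c⟩ := h
  refine ⟨R.submatrix e.symm e.symm, R'.submatrix e.symm e.symm, ?_, ?_, ?_⟩
  · rw [submatrix_mul_equiv, a, submatrix_one_equiv]
  · rw [submatrix_mul_equiv, b, submatrix_one_equiv]
  · have : P = (P.submatrix e e).submatrix e.symm e.symm := by simp
    rw [this, conjTranspose_submatrix, submatrix_mul_equiv, submatrix_mul_equiv]
    exact c.submatrix e.symm.injective

theorem GoodDiag.block {ι κ : Type} [Fintype ι] [DecidableEq ι] [Fintype κ] [DecidableEq κ]
    [Subsingleton ι] {a a' : Matrix ι ι ℍ[ℝ]} {b : Matrix ι κ ℍ[ℝ]} {c : Matrix κ κ ℍ[ℝ]}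
    (haa : a * a' = 1) (ha : aᴴ = a) (ha' : a'ᴴ = a')
    (h : GoodDiag (c - bᴴ * a' * b)) : GoodDiag (fromBlocks a b bᴴ c) := by
  have haa' : a' * a = 1 := by
    have := congrArg conjTranspose haa
    simpa [conjTranspose_mul, ha, ha'] using this
  apply GoodDiag.congr (L := fromBlocks 1 (-(a' * b)) 0 1) (L' := fromBlocks 1 (a' * b) 0 1)
  · simp [fromBlocks_multiply]
  · simp [fromBlocks_multiply]
  obtain ⟨R, R', h1, h2, h3⟩ := h
  refine ⟨fromBlocks 1 0 0 R, fromBlocks 1 0 0 R', ?_, ?_, ?_⟩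
  · simp [fromBlocks_multiply, h1]
  · simp [fromBlocks_multiply, h2]
  · have e : (fromBlocks 1 (-(a' * b)) 0 1)ᴴ * fromBlocks a b bᴴ c * fromBlocks 1 (-(a' * b)) 0 1
        = fromBlocks a 0 0 (c - bᴴ * a' * b) := by
      have e1 : a * (a' * b) = b := by rw [← Matrix.mul_assoc, haa, Matrix.one_mul]
      simp [fromBlocks_conjTranspose, fromBlocks_multiply, e1, ha', Matrix.mul_assoc, haa']
      abel
    rw [e]
    have e2 : (fromBlocks (1 : Matrix ι ι ℍ[ℝ]) 0 0 R)ᴴ * fromBlocks a 0 0 (c - bᴴ * a' * b) *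
        fromBlocks 1 0 0 R = fromBlocks a 0 0 (Rᴴ * (c - bᴴ * a' * b) * R) := by
      simp [fromBlocks_conjTranspose, fromBlocks_multiply]
    rw [e2]
    exact IsDiag.fromBlocks (isDiag_of_subsingleton _) h3

theorem goodDiag_of_entry {ι : Type} [Fintype ι] [DecidableEq ι] {P : Matrix ι ι ℍ[ℝ]}
    (hP : Pᴴ = P) (j : ι) (hj : P j j ≠ 0)
    (ih : ∀ Q : Matrix {a // ¬ a = j} {a // ¬ a = j} ℍ[ℝ], Qᴴ = Q → GoodDiag Q) : GoodDiag P := by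
  apply GoodDiag.of_submatrix (Equiv.sumCompl (fun a => a = j))
  have hs : ∀ i k, star (P i k) = P k i := fun i k => congrFun (congrFun hP k) i
  set a : Matrix {a // a = j} {a // a = j} ℍ[ℝ] := of fun _ _ => P j j with hadef
  set a' : Matrix {a // a = j} {a // a = j} ℍ[ℝ] := of fun _ _ => (P j j)⁻¹ with hadef'
  set b : Matrix {a // a = j} {a // ¬ a = j} ℍ[ℝ] := of fun i k => P i k
  set c : Matrix {a // ¬ a = j} {a // ¬ a = j} ℍ[ℝ] := of fun i k => P i k with hc
  have e : P.submatrix (Equiv.sumCompl (fun a => a = j)) (Equiv.sumCompl (fun a => a = j))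
      = fromBlocks a b bᴴ c := by
    ext1 i k
    rcases i with ⟨i, rfl⟩ | i <;> rcases k with ⟨k, hk⟩ | k
    · subst hk; simp [a]
    · simp [b]
    · simp [b, hs]
    · simp [c]
  have ha : aᴴ = a := by ext1 i k; simp [a, hs]
  have ha' : a'ᴴ = a' := by ext1 i k; simp [a', hs, star_inv₀]
  have hcc : cᴴ = c := by ext1 i k; simp [c, hs]
  rw [e]
  apply GoodDiag.block (a' := a') _ ha ha'
  · apply ih
    simp [conjTranspose_sub, conjTranspose_mul, ha', hcc, Matrix.mul_assoc]
  · ext1 i k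
    obtain rfl : i = k := Subsingleton.elim _ _
    simp [Matrix.mul_apply, a, a', hj]

theorem goodDiag_all : ∀ (n : ℕ) (ι : Type) [Fintype ι] [DecidableEq ι] (P : Matrix ι ι ℍ[ℝ]),
    Fintype.card ι = n → Pᴴ = P → GoodDiag P := by
  intro n
  induction n with
  | zero =>
    intro ι _ _ P hc hP
    have := Fintype.card_eq_zero_iff.mp hc
    exact ⟨1, 1, by simp, by simp, isDiag_of_subsingleton _⟩
  | succ n ih =>
    intro ι _ _ P hc hP
    have key : ∀ Q : Matrix ι ι ℍ[ℝ], Qᴴ = Q → ∀ j, Q j j ≠ 0 → GoodDiag Q := by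
      intro Q hQ j hj
      apply goodDiag_of_entry hQ j hj
      intro S hS
      refine ih _ S ?_ hS
      rw [Fintype.card_subtype_compl, hc]
      simp
    have hs : ∀ i k, star (P i k) = P k i := fun i k => congrFun (congrFun hP k) i
    by_cases h0 : ∃ j, P j j ≠ 0
    · obtain ⟨j, hj⟩ := h0
      exact key P hP j hj
    push Not at h0
    by_cases h1 : ∃ i j, P i j ≠ 0
    · obtain ⟨i, j, hij⟩ := h1
      have hne : i ≠ j := by rintro rfl; exact hij (h0 i)
      apply GoodDiag.congr (L := 1 + single j i (star (P i j)))
        (L' := 1 - single j i (star (P i j)))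
      · simp [mul_sub, add_mul, hne]
      · simp [sub_mul, mul_add, hne]
      · apply key _ (by simp only [conjTranspose_mul, conjTranspose_conjTranspose, hP,
          Matrix.mul_assoc]) i
        have : ((1 + single j i (star (P i j)) : Matrix ι ι ℍ[ℝ])ᴴ * P *
            (1 + single j i (star (P i j)) : Matrix ι ι ℍ[ℝ])) i i
            = P i j * star (P i j) + P i j * star (P i j) := by
          simp [conjTranspose_single, add_mul, mul_add, h0, hs]
        rw [this, Quaternion.self_mul_star, ← Quaternion.coe_add]
        intro hz
        have hz' : normSq (P i j) + normSq (P i j) = 0 :=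
          Quaternion.coe_injective (hz.trans Quaternion.coe_zero.symm)
        have : normSq (P i j) = 0 := by linarith
        exact hij (Quaternion.normSq_eq_zero.mp this)
    · push Not at h1
      refine ⟨1, 1, by simp, by simp, ?_⟩
      have : P = 0 := by ext1 i j; simp [h1]
      simp [this]

theorem isUnit_one_add_col {ι : Type} [Fintype ι] [DecidableEq ι] (j : ι) (w : ι → ℍ[ℝ])
    (h : 1 + w j ≠ 0) :
    IsUnit ((1 : Matrix ι ι ℍ[ℝ]) + of fun i k => if k = j then w i else 0) := by
  set Z : Matrix ι ι ℍ[ℝ] := of fun i k => if k = j then w i else 0 with hZ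
  set Y : Matrix ι ι ℍ[ℝ] := of fun i k => if k = j then w i * (1 + w j)⁻¹ else 0 with hY
  have hZY : Z * Y = of fun i k => if k = j then w i * (w j * (1 + w j)⁻¹) else 0 := by
    ext1 i k
    simp [Matrix.mul_apply, Z, Y]
  have hYZ : Y * Z = of fun i k => if k = j then w i * ((1 + w j)⁻¹ * w j) else 0 := by
    ext1 i k
    simp [Matrix.mul_apply, Z, Y, mul_assoc]
  have q1 : w j * (1 + w j)⁻¹ = 1 - (1 + w j)⁻¹ := by
    have := mul_inv_cancel₀ h
    rw [add_mul, one_mul] at this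
    exact eq_sub_of_add_eq' this
  have q2 : (1 + w j)⁻¹ * w j = 1 - (1 + w j)⁻¹ := by
    have := inv_mul_cancel₀ h
    rw [mul_add, mul_one] at this
    exact eq_sub_of_add_eq' this
  have r1 : Z * Y = Z - Y := by
    rw [hZY, q1]; ext1 i k
    by_cases hk : k = j <;> simp [Z, Y, hk, mul_sub]
  have r2 : Y * Z = Z - Y := by
    rw [hYZ, q2]; ext1 i k
    by_cases hk : k = j <;> simp [Z, Y, hk, mul_sub]
  refine ⟨⟨1 + Z, 1 - Y, ?_, ?_⟩, rfl⟩
  · rw [mul_sub, mul_one, add_mul, r1]; simp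
  · rw [mul_add, mul_one, sub_mul, r2]; simp

theorem exists_signs {ι : Type} [Fintype ι] [DecidableEq ι] (A : Matrix ι ι ℍ[ℝ]) :
    ∃ θ : ι → ℍ[ℝ], (∀ i, θ i = 1 ∨ θ i = -1) ∧ IsUnit (A - diagonal θ) := by
  suffices H : ∀ s : Finset ι, ∃ θ : ι → ℍ[ℝ], (∀ i, θ i = 1 ∨ θ i = -1) ∧
      IsUnit (of fun i k => if k ∈ s then (A - diagonal θ) i k else (1 : Matrix ι ι ℍ[ℝ]) i k) by
    obtain ⟨θ, h1, h2⟩ := H Finset.univ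
    refine ⟨θ, h1, ?_⟩
    convert h2 using 1
    ext1 i k
    simp
  intro s
  induction s using Finset.induction_on with
  | empty =>
    refine ⟨fun _ => 1, fun _ => Or.inl rfl, ?_⟩
    convert isUnit_one using 1
    ext1 i k
    simp
  | insert j s hj ih =>
    obtain ⟨θ, h1, X, hX⟩ := ih
    have hXe : ∀ i, (X : Matrix ι ι ℍ[ℝ]) i j = (1 : Matrix ι ι ℍ[ℝ]) i j := by
      intro i; rw [hX]; simp [hj]
    set u : ι → ℍ[ℝ] := fun i => ((X⁻¹ : (Matrix ι ι ℍ[ℝ])ˣ) * A : Matrix ι ι ℍ[ℝ]) i j with hu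
    have hXu : ∀ i, ∑ k, (X : Matrix ι ι ℍ[ℝ]) i k * u k = A i j := by
      intro i
      have : (X * ((X⁻¹ : (Matrix ι ι ℍ[ℝ])ˣ) * A) : Matrix ι ι ℍ[ℝ]) i j = A i j := by
        rw [Units.mul_inv_cancel_left]
      rwa [Matrix.mul_apply] at this
    obtain ⟨t, ht, htu⟩ : ∃ t : ℍ[ℝ], (t = 1 ∨ t = -1) ∧ u j - t ≠ 0 := by
      by_cases hh : u j = 1
      · refine ⟨-1, Or.inr rfl, ?_⟩
        rw [hh, sub_neg_eq_add]
        intro h2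
        have := congrArg (fun q : ℍ[ℝ] => q.re) h2
        rw [Quaternion.re_add, Quaternion.re_one, Quaternion.re_zero] at this
        norm_num at this
      · exact ⟨1, Or.inl rfl, sub_ne_zero.mpr hh⟩
    refine ⟨Function.update θ j t, ?_, ?_⟩
    · intro i
      by_cases hi : i = j
      · subst hi; simpa using ht
      · simpa [hi] using h1 i
    · have hY := isUnit_one_add_col j
        (fun i => u i - (t + 1) * (1 : Matrix ι ι ℍ[ℝ]) i j) (by
          simp only [one_apply_eq, mul_one]
          convert htu using 1
          abel)
      convert X.isUnit.mul hY using 1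
      have tc : ∀ q : ℍ[ℝ], q * (t + 1) = (t + 1) * q := by
        rcases ht with rfl | rfl <;> intro q <;> simp [mul_add, add_mul]
      ext1 i k
      rw [mul_add, mul_one, Matrix.add_apply]
      by_cases hk : k = j
      · subst hk
        have : ((X : Matrix ι ι ℍ[ℝ]) * of fun i l => if l = k then
            u i - (t + 1) * (1 : Matrix ι ι ℍ[ℝ]) i k else 0) i k
            = A i k - (t + 1) * (1 : Matrix ι ι ℍ[ℝ]) i k := by
          rw [Matrix.mul_apply]
          simp only [of_apply, if_true, mul_sub, Finset.sum_sub_distrib, hXu]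
          simp [Matrix.one_apply, hXe, tc]
        rw [this, hXe]
        by_cases hik : i = k
        · subst hik; simp; abel
        · simp [hik]
      · have : ((X : Matrix ι ι ℍ[ℝ]) * of fun i l => if l = j then
            u i - (t + 1) * (1 : Matrix ι ι ℍ[ℝ]) i j else 0) i k = 0 := by
          rw [Matrix.mul_apply]
          simp [hk]
        rw [this, hX]
        by_cases hks : k ∈ s
        · simp only [of_apply, Finset.mem_insert, hk, hks, or_true, if_true, add_zero,
            Matrix.sub_apply]
          by_cases hik : i = k
          · subst hik; simp [hk]
          · simp [hik]
        · simp [hk, hks]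

theorem exists_isometry {ι : Type} [Fintype ι] [DecidableEq ι] (A P : Matrix ι ι ℍ[ℝ])
    (hP : Pᴴ = P) : ∃ T : Matrix ι ι ℍ[ℝ], Tᴴ * P * T = P ∧ IsUnit (A - T) ∧ IsUnit T := by
  obtain ⟨R, R', h1, h2, h3⟩ := goodDiag_all _ ι P rfl hP
  obtain ⟨θ, hθ, hu⟩ := exists_signs (R' * A * R)
  have hR : IsUnit R := ⟨⟨R, R', h1, h2⟩, rfl⟩
  have hR' : IsUnit R' := ⟨⟨R', R, h2, h1⟩, rfl⟩
  have h1' : R'ᴴ * Rᴴ = 1 := by rw [← conjTranspose_mul, h1, conjTranspose_one]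
  have hΘ : (diagonal θ)ᴴ * (Rᴴ * P * R) * diagonal θ = Rᴴ * P * R := by
    ext1 i k
    rw [diagonal_conjTranspose, mul_diagonal, diagonal_mul]
    by_cases hik : i = k
    · subst hik
      rcases hθ i with h | h <;> simp [h]
    · rw [h3 hik]; simp
  refine ⟨R * diagonal θ * R', ?_, ?_, ?_⟩
  · calc (R * diagonal θ * R')ᴴ * P * (R * diagonal θ * R')
        = R'ᴴ * ((diagonal θ)ᴴ * (Rᴴ * P * R) * diagonal θ) * R' := by
          simp only [conjTranspose_mul, Matrix.mul_assoc]
      _ = (R'ᴴ * Rᴴ) * P * (R * R') := by rw [hΘ]; simp only [Matrix.mul_assoc]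
      _ = P := by rw [h1, h1']; simp
  · have : A - R * diagonal θ * R' = R * (R' * A * R - diagonal θ) * R' := by
      have : R * (R' * A * R) * R' = (R * R') * A * (R * R') := by simp only [Matrix.mul_assoc]
      rw [mul_sub, sub_mul, this, h1]; simp
    rw [this]
    exact (hR.mul hu).mul hR'
  · refine (hR.mul ?_).mul hR'
    have : diagonal θ * diagonal θ = 1 := by
      rw [diagonal_mul_diagonal, ← diagonal_one]
      congr 1; ext1 i
      rcases hθ i with h | h <;> simp [h]
    exact ⟨⟨_, _, this, this⟩, rfl⟩

/-- Witt extension in the generic case. -/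
theorem witt_generic {m n : Type} [Fintype m] [DecidableEq m] [Fintype n] [DecidableEq n]
    (J : Matrix n n ℍ[ℝ]) (hJ : Jᴴ = J) (V F : Matrix n m ℍ[ℝ])
    (h : Vᴴ * J * V = Fᴴ * J * F) (hu : IsUnit (Vᴴ * J * F - Fᴴ * J * F)) :
    ∃ W : Matrix n n ℍ[ℝ], W * F = V ∧ Wᴴ * J * W = J := by
  rw [← Matrix.sub_mul, ← Matrix.sub_mul, ← conjTranspose_sub] at hu
  obtain ⟨S, hS⟩ := hu
  set X := V - F with hX
  set K : Matrix m m ℍ[ℝ] := ((S⁻¹ : (Matrix m m ℍ[ℝ])ˣ) : Matrix m m ℍ[ℝ]) with hK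
  have k1 : K * (S : Matrix m m ℍ[ℝ]) = 1 := S.inv_mul
  have k2 : (S : Matrix m m ℍ[ℝ]) * K = 1 := S.mul_inv
  have k3 : Kᴴ * (S : Matrix m m ℍ[ℝ])ᴴ = 1 := by
    rw [← conjTranspose_mul, k2, conjTranspose_one]
  have hXX : Xᴴ * J * X = -(S : Matrix m m ℍ[ℝ]) - (S : Matrix m m ℍ[ℝ])ᴴ := by
    rw [hS]
    simp only [hX, conjTranspose_sub, conjTranspose_mul, conjTranspose_conjTranspose, hJ,
      Matrix.sub_mul, Matrix.mul_sub, ← Matrix.mul_assoc]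
    rw [h]; abel
  refine ⟨1 + X * K * Xᴴ * J, ?_, ?_⟩
  · have : X * K * Xᴴ * J * F = X * (K * (Xᴴ * J * F)) := by simp only [Matrix.mul_assoc]
    rw [Matrix.add_mul, this, ← hS, k1]
    simp [hX]
  · have e1 : (1 + X * K * Xᴴ * J)ᴴ = 1 + J * X * Kᴴ * Xᴴ := by
      simp only [conjTranspose_add, conjTranspose_one, conjTranspose_mul,
        conjTranspose_conjTranspose, hJ, Matrix.mul_assoc]
    have e2 : (1 + J * X * Kᴴ * Xᴴ) * J * (1 + X * K * Xᴴ * J)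
        = J + J * X * (K + Kᴴ + Kᴴ * (Xᴴ * J * X) * K) * Xᴴ * J := by
      simp only [Matrix.add_mul, Matrix.mul_add, Matrix.one_mul, Matrix.mul_one, Matrix.mul_assoc]
      abel
    have e3 : K + Kᴴ + Kᴴ * (Xᴴ * J * X) * K = 0 := by
      rw [hXX, Matrix.mul_sub, Matrix.sub_mul, k3, Matrix.mul_neg, Matrix.neg_mul,
        Matrix.mul_assoc, k2]
      simp only [Matrix.mul_one, Matrix.one_mul]
      abel
    rw [e1, e2, e3]; simp

/-- **Proposition**: given a signature matrix `σ`, an observable pair `(C, A)` and an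
invertible Hermitian solution `P` of the Stein equation `P − A* P A = C* σ C`, there
exist `B`, `D` such that `W = [[A,B],[C,D]]` satisfies `W* diag(P,σ) W = diag(P,σ)`. -/
theorem stein_unitary_completion {M N : ℕ}
    (σ : Matrix (Fin N) (Fin N) ℍ[ℝ]) (hσherm : σᴴ = σ) (hσinv : σ * σ = 1)
    (A : Matrix (Fin M) (Fin M) ℍ[ℝ]) (C : Matrix (Fin N) (Fin M) ℍ[ℝ])
    (hobs : ∀ v : Fin M → ℍ[ℝ], (∀ k : ℕ, (C * A ^ k).mulVec v = 0) → v = 0)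
    (P : Matrix (Fin M) (Fin M) ℍ[ℝ]) (hP : Pᴴ = P) (hPinv : IsUnit P)
    (hstein : P - Aᴴ * P * A = Cᴴ * σ * C) :
    ∃ (B : Matrix (Fin M) (Fin N) ℍ[ℝ]) (D : Matrix (Fin N) (Fin N) ℍ[ℝ]),
      (fromBlocks A B C D)ᴴ * fromBlocks P 0 0 σ * fromBlocks A B C D =
        fromBlocks P 0 0 σ := by
  obtain ⟨T, hT, hAT, hTu⟩ := exists_isometry A P hP
  have hATs : IsUnit (A - T)ᴴ := hAT.star
  obtain ⟨W, hW1, hW2⟩ := witt_generic (fromBlocks P 0 0 σ)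
    (by simp [fromBlocks_conjTranspose, hP, hσherm]) (fromRows A C) (fromRows T 0)
    (by
      simp only [conjTranspose_fromRows_eq_fromCols_conjTranspose, fromCols_mul_fromBlocks,
        fromCols_mul_fromRows]
      simp [hT, ← hstein])
    (by
      simp only [conjTranspose_fromRows_eq_fromCols_conjTranspose, fromCols_mul_fromBlocks,
        fromCols_mul_fromRows, Matrix.mul_zero, add_zero, ← Matrix.sub_mul,
        ← conjTranspose_sub, conjTranspose_zero, Matrix.zero_mul]
      exact (hATs.mul hPinv).mul hTu)
  have hWb := fromBlocks_toBlocks W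
  have hW' : W * fromBlocks T 0 0 1 = fromBlocks A W.toBlocks₁₂ C W.toBlocks₂₂ := by
    rw [← hWb, fromBlocks_mul_fromRows] at hW1
    obtain ⟨x, y⟩ := fromRows_inj hW1
    simp only [Matrix.mul_zero, add_zero] at x y
    nth_rewrite 1 [← hWb]
    rw [fromBlocks_multiply]
    simp [x, y]
  refine ⟨W.toBlocks₁₂, W.toBlocks₂₂, ?_⟩
  rw [← hW']
  calc (W * fromBlocks T 0 0 1)ᴴ * fromBlocks P 0 0 σ * (W * fromBlocks T 0 0 1)
      = (fromBlocks T 0 0 1)ᴴ * (Wᴴ * fromBlocks P 0 0 σ * W) * fromBlocks T 0 0 1 := by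
        simp only [conjTranspose_mul, Matrix.mul_assoc]
    _ = fromBlocks P 0 0 σ := by
        rw [hW2]
        simp [fromBlocks_conjTranspose, fromBlocks_multiply, hT]
end
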